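/- Let p, q ∈ R be idempotents. Then p*q is group invertible if and only if q1 is group invertible and q1^π * q2 = 0. In this case (p*q)^# = q1^# + (q1^#)^2 * q2. -/

import Mathlib

/-!
Put `a = p * q`, so that `p * a = a`, and split `a = x + y` with `x = a * p` and `y = a * (1 - p)`.
Then `y * a = 0`: relative to `p`, the element `a` is block upper triangular with zero bottom row.

If `c` is the group inverse of `a`, then `p * c = c`, hence `(a * p) * (c * p) = (a * c) * p`. Thus
`c * p` is the group inverse of `x`, and `x * (c * p)` fixes `a`, in particular `y`. Conversely, if
`d` is the group inverse of `x` and `x * d` fixes `y`, then `(x + y) * (d + d ^ 2 * y)` and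
`(d + d ^ 2 * y) * (x + y)` are both equal to the idempotent `x * d + d * y`.
-/

variable {R : Type*} [Ring R]

/-- `c` is a group inverse of `a`. -/
def IsGroupInvOf (a c : R) : Prop := a * c * a = a ∧ c * a * c = c ∧ a * c = c * a

/-- `a` is group invertible. -/
def GroupInvertible (a : R) : Prop := ∃ c, IsGroupInvOf a c

/-- The group inverse `a^#` (junk value `0` if it does not exist). -/
noncomputable def gi (a : R) : R :=
  haveI := Classical.dec (GroupInvertible a)
  if h : GroupInvertible a then h.choose else 0

/-- The spectral idempotent `a^π = 1 - a * a^#`. -/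
noncomputable def sp (a : R) : R := 1 - a * gi a

theorem GroupInvertible.isGroupInvOf_gi {a : R} (h : GroupInvertible a) :
    IsGroupInvOf a (gi a) := by
  rw [gi, dif_pos h]
  exact h.choose_spec

theorem sp_mul_eq_zero_iff {a b : R} : sp a * b = 0 ↔ a * gi a * b = b := by
  rw [sp, sub_mul, one_mul, sub_eq_zero, eq_comm]

namespace IsGroupInvOf

variable {a c d p x y : R}

theorem symm (h : IsGroupInvOf a c) : IsGroupInvOf c a :=
  ⟨h.2.1, h.1, h.2.2.symm⟩

theorem mul_sq_eq (h : IsGroupInvOf a c) : a * c ^ 2 = c := by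
  rw [sq, ← mul_assoc, h.2.2, h.2.1]

theorem mul_eq_mul (hc : IsGroupInvOf a c) (hd : IsGroupInvOf a d) : a * c = a * d :=
  calc a * c = c * (a * d * a) := by rw [hd.1, hc.2.2]
    _ = c * a * (d * a) := by simp only [mul_assoc]
    _ = a * c * (a * d) := by rw [hc.2.2, hd.2.2]
    _ = a * d := by rw [← mul_assoc, hc.1]

theorem unique (hc : IsGroupInvOf a c) (hd : IsGroupInvOf a d) : c = d :=
  calc c = a * c * c := by rw [hc.2.2, hc.2.1]
    _ = d * a * c := by rw [hc.mul_eq_mul hd, hd.2.2]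
    _ = d := by rw [mul_assoc, hc.mul_eq_mul hd, ← mul_assoc, hd.2.1]

theorem gi_eq (h : IsGroupInvOf a c) : gi a = c :=
  (GroupInvertible.isGroupInvOf_gi ⟨c, h⟩).unique h

theorem mul_eq_self_of_mul_eq_self (h : IsGroupInvOf a c) (hpa : p * a = a) : p * c = c := by
  rw [← h.mul_sq_eq, ← mul_assoc, hpa]

theorem mul_eq_zero_of_mul_eq_zero (h : IsGroupInvOf a c) (hya : y * a = 0) : y * c = 0 := by
  rw [← h.mul_sq_eq, ← mul_assoc, hya, zero_mul]

theorem mul_right_mul_mul_right (h : IsGroupInvOf a c) (hpa : p * a = a) :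
    a * p * (c * p) = a * c * p := by
  rw [mul_assoc a, ← mul_assoc p, h.mul_eq_self_of_mul_eq_self hpa, mul_assoc]

theorem mul_right_mul_mul_right_mul_self (h : IsGroupInvOf a c) (hpa : p * a = a) :
    a * p * (c * p) * a = a := by
  rw [h.mul_right_mul_mul_right hpa, mul_assoc, hpa, h.1]

theorem mul_right_of_mul_eq_self (h : IsGroupInvOf a c) (hpa : p * a = a) :
    IsGroupInvOf (a * p) (c * p) := by
  have hpc : p * c = c := h.mul_eq_self_of_mul_eq_self hpa
  refine ⟨?_, ?_, ?_⟩
  · rw [← mul_assoc, h.mul_right_mul_mul_right_mul_self hpa]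
  · rw [← mul_assoc, h.symm.mul_right_mul_mul_right_mul_self hpc]
  · rw [h.mul_right_mul_mul_right hpa, h.symm.mul_right_mul_mul_right hpc, h.2.2]

theorem sp_mul_right_mul_self (h : IsGroupInvOf a c) (hpa : p * a = a) : sp (a * p) * a = 0 := by
  rw [sp_mul_eq_zero_iff, (h.mul_right_of_mul_eq_self hpa).gi_eq]
  exact h.mul_right_mul_mul_right_mul_self hpa

theorem add_of_mul_eq_zero (h : IsGroupInvOf x d) (hyx : y * x = 0) (hxdy : x * d * y = y) :
    IsGroupInvOf (x + y) (d + d ^ 2 * y) := by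
  have hyd : y * d = 0 := h.mul_eq_zero_of_mul_eq_zero hyx
  have hyy : y * y = 0 :=
    calc y * y = y * (x * d * y) := by rw [hxdy]
      _ = y * x * d * y := by simp only [mul_assoc]
      _ = 0 := by simp only [hyx, zero_mul]
  have add_mul_inv : (x + y) * (d + d ^ 2 * y) = x * d + d * y :=
    calc (x + y) * (d + d ^ 2 * y)
        = x * d + x * d ^ 2 * y + y * d + y * d * d * y := by noncomm_ring
      _ = x * d + d * y := by simp only [h.mul_sq_eq, hyd, zero_mul, add_zero]
  have inv_mul_add : (d + d ^ 2 * y) * (x + y) = x * d + d * y :=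
    calc (d + d ^ 2 * y) * (x + y)
        = d * x + d * y + d ^ 2 * (y * x) + d ^ 2 * (y * y) := by noncomm_ring
      _ = x * d + d * y := by simp only [h.2.2, hyx, hyy, mul_zero, add_zero]
  refine ⟨?_, ?_, add_mul_inv.trans inv_mul_add.symm⟩
  · calc (x + y) * (d + d ^ 2 * y) * (x + y)
        = x * d * x + x * d * y + d * (y * x) + d * (y * y) := by rw [add_mul_inv]; noncomm_ring
      _ = x + y := by simp only [h.1, hxdy, hyx, hyy, mul_zero, add_zero]
  · calc (d + d ^ 2 * y) * (x + y) * (d + d ^ 2 * y)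
        = x * d ^ 2 + x * d ^ 2 * (d * y) + d * (y * d) + d * (y * d) * (d * y) := by
          rw [inv_mul_add]; noncomm_ring
      _ = d + d * (d * y) := by simp only [h.mul_sq_eq, hyd, mul_zero, zero_mul, add_zero]
      _ = d + d ^ 2 * y := by rw [sq, mul_assoc]

end IsGroupInvOf

theorem group_inv_pq_general {p a : R} (hpa : p * a = a) :
    (GroupInvertible a ↔ GroupInvertible (a * p) ∧ sp (a * p) * (a * (1 - p)) = 0) ∧
    (GroupInvertible a → gi a = gi (a * p) + gi (a * p) ^ 2 * (a * (1 - p))) := by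
  have necessity : GroupInvertible a →
      GroupInvertible (a * p) ∧ sp (a * p) * (a * (1 - p)) = 0 := by
    rintro ⟨c, hc⟩
    refine ⟨⟨c * p, hc.mul_right_of_mul_eq_self hpa⟩, ?_⟩
    rw [← mul_assoc, hc.sp_mul_right_mul_self hpa, zero_mul]
  have sufficiency : GroupInvertible (a * p) ∧ sp (a * p) * (a * (1 - p)) = 0 →
      IsGroupInvOf a (gi (a * p) + gi (a * p) ^ 2 * (a * (1 - p))) := by
    rintro ⟨hx, hsp⟩
    have hsum : a * p + a * (1 - p) = a := by noncomm_ring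
    have hyx : a * (1 - p) * (a * p) = 0 := by
      rw [mul_assoc, ← mul_assoc (1 - p), sub_mul, hpa, one_mul, sub_self, zero_mul, mul_zero]
    have hadd := hx.isGroupInvOf_gi.add_of_mul_eq_zero hyx (sp_mul_eq_zero_iff.mp hsp)
    rwa [hsum] at hadd
  exact ⟨⟨necessity, fun h ↦ ⟨_, sufficiency h⟩⟩, fun h ↦ (sufficiency (necessity h)).gi_eq⟩

theorem group_inv_pq (p q q1 q2 q3 q4 : R) (hp : p * p = p) (hq : q * q = q)
    (h1 : q1 = p * q * p) (h2 : q2 = p * q * (1 - p))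
    (h3 : q3 = (1 - p) * q * p) (h4 : q4 = (1 - p) * q * (1 - p)) :
    (GroupInvertible (p * q) ↔ GroupInvertible q1 ∧ sp q1 * q2 = 0) ∧
    (GroupInvertible (p * q) → gi (p * q) = gi q1 + (gi q1) ^ 2 * q2) := by
  subst h1 h2
  exact group_inv_pq_general (IsIdempotentElem.mul_self_mul hp q)
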